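/- arXiv:2211.12066 — 2 statements merged into one kernel-verified Lean document; each statement's English description precedes it below -/
import Mathlib

section
/- Let N ≥ 3, q ∈ [1,∞], and β, γ ∈ ℝ with β > -N/q and γ < -N/q. Then there exists a constant C₂ > 0 (depending only on N, q, β, γ) such that ‖f‖_{L^q(ℝ^N)} ≤ C₂ ‖f‖_{L^q_{β,γ}} for every f ∈ L^q_{β,γ}. -/
/-!
The dyadic annuli `A(0, 2^k)`, `k ∈ ℤ`, are pairwise disjoint and cover `ℝ^N \ {0}`, so Minkowski's
inequality gives `‖f‖_q ≤ ∑_k ‖f‖_{L^q(A(0, 2^k))}` for every `q ∈ [1, ∞]`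
(`eLpNorm_le_tsum_restrict`). By definition of the weighted norm, the `k`-th term is at most
`2^(kN/q) ω_{β,γ}(2^k) ‖f‖_{L^q_{β,γ}}`. With `s = N/q`, the coefficients are `(2^(s+γ))^k` for
`k ≥ 0` and `(2^(-(s+β)))^(-k)` for `k ≤ 0`: two geometric progressions, which converge because
`s + γ < 0 < s + β` (`summable_dyadic_weight`). The sum of the coefficients is the constant.
For `q = ∞` the same argument applies with `s = 0`, which is the value of `N / q.toReal`.
-/

open MeasureTheory Metric ENNReal Filter

noncomputable section

abbrev Euc (N : ℕ) : Type := EuclideanSpace ℝ (Fin N)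

/-- The fundamental solution `Γ(x) = |x|^{2-N} / (N (N-2) ω_N)` of `-Δ` on `ℝ^N`. -/
def fundSol (N : ℕ) (x : Euc N) : ℝ :=
  ‖x‖ ^ (2 - (N : ℝ)) / ((N : ℝ) * ((N : ℝ) - 2) * (volume (ball (0 : Euc N) 1)).toReal)

/-- The annulus `A(0,R) = B(0,R) \ B(0,R/2)`. -/
def annulusA (N : ℕ) (R : ℝ) : Set (Euc N) := ball (0 : Euc N) R \ ball 0 (R / 2)

/-- The weight `ω_{β,γ}(R)`. -/
def omegaWt (β γ R : ℝ) : ℝ := if R ≤ 1 then R ^ β else R ^ γ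

/-- The weighted norm `‖f‖_{L^q_{β,γ}} = sup_{R>0} R^{-N/q} ω_{β,γ}(R)⁻¹ ‖f‖_{L^q(A(0,R))}`. -/
def wNorm (N : ℕ) (q : ℝ≥0∞) (β γ : ℝ) (f : Euc N → ℝ) : ℝ≥0∞ :=
  ⨆ R : {R : ℝ // 0 < R},
    ENNReal.ofReal (((R : ℝ) ^ (-((N : ℝ) / q.toReal))) / omegaWt β γ (R : ℝ)) *
      eLpNorm f q (volume.restrict (annulusA N (R : ℝ)))

/-- Membership in the weighted space `L^q_{β,γ}`. -/
def MemW (N : ℕ) (q : ℝ≥0∞) (β γ : ℝ) (f : Euc N → ℝ) : Prop :=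
  AEStronglyMeasurable f volume ∧ wNorm N q β γ f < ⊤

/-- `(Γ * f)(x) = ∫ Γ(x-y) f(y) dy` as an `ℝ≥0∞`-valued integral (for `f ≥ 0`). -/
def GammaConvFn (N : ℕ) (f : Euc N → ℝ) (x : Euc N) : ℝ≥0∞ :=
  ∫⁻ y, ENNReal.ofReal (fundSol N (x - y)) * ENNReal.ofReal (f y)

/-- `(Γ * μ)(x) = ∫ Γ(x-y) dμ(y)`. -/
def GammaConvMeas (N : ℕ) (μ : Measure (Euc N)) (x : Euc N) : ℝ≥0∞ :=
  ∫⁻ y, ENNReal.ofReal (fundSol N (x - y)) ∂μ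

/-- A solution of problem `(P_κ)`. -/
def IsSolution (N : ℕ) (α : Euc N → ℝ) (p : ℝ) (μ : Measure (Euc N)) (κ : ℝ)
    (u : Euc N → ℝ) : Prop :=
  Measurable u ∧ (∀ᵐ x, 0 < u x) ∧
    ∀ᵐ x, ENNReal.ofReal (u x)
      = GammaConvFn N (fun y => α y * u y ^ p) x + ENNReal.ofReal κ * GammaConvMeas N μ x

/-- A minimal solution of problem `(P_κ)`. -/
def IsMinSolution (N : ℕ) (α : Euc N → ℝ) (p : ℝ) (μ : Measure (Euc N)) (κ : ℝ)
    (u : Euc N → ℝ) : Prop :=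
  IsSolution N α p μ κ u ∧ ∀ v, IsSolution N α p μ κ v → ∀ᵐ x, u x ≤ v x

/-- Countable triangle inequality in `L^q` for a function cut along disjoint pieces. -/
lemma eLpNorm_le_tsum_restrict {α : Type*} {m : MeasurableSpace α} {μ : Measure α} {q : ℝ≥0∞}
    (hq : 1 ≤ q) {f : α → ℝ} (hf : AEStronglyMeasurable f μ) {s : ℤ → Set α}
    (hs : ∀ k, MeasurableSet (s k)) (hd : Pairwise fun i j => Disjoint (s i) (s j))
    (hcov : ∀ᵐ x ∂μ, ∃ k, x ∈ s k) :
    eLpNorm f q μ ≤ ∑' k, eLpNorm f q (μ.restrict (s k)) := by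
  -- Fatou's lemma reduces the claim to the partial sums over `-n ≤ k ≤ n`.
  have hF : ∀ n : ℕ, ∀ k ∈ Finset.Icc (-(n : ℤ)) n,
      AEStronglyMeasurable ((s k).indicator f) μ := fun n k _ => hf.indicator (hs k)
  refine (Lp.eLpNorm_lim_le_liminf_eLpNorm
    (f := fun n : ℕ => ∑ k ∈ Finset.Icc (-(n : ℤ)) n, (s k).indicator f)
    (fun n => Finset.aestronglyMeasurable_sum _ (hF n)) f ?_).trans ?_
  · filter_upwards [hcov] with x ⟨k, hk⟩
    refine tendsto_const_nhds.congr' ?_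
    filter_upwards [eventually_ge_atTop k.natAbs] with n hn
    rw [Finset.sum_apply, Finset.sum_eq_single_of_mem k (by rw [Finset.mem_Icc]; omega),
      Set.indicator_of_mem hk]
    intro l _ hl
    exact Set.indicator_of_notMem (fun h => Set.disjoint_left.1 (hd hl) h hk) _
  · refine liminf_le_of_le (by isBoundedDefault) (fun b hb => ?_)
    obtain ⟨n, hn⟩ := hb.exists
    refine hn.trans ((eLpNorm_sum_le (hF n) hq).trans ?_)
    simp_rw [eLpNorm_indicator_eq_eLpNorm_restrict (hs _)]
    exact ENNReal.sum_le_tsum _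

lemma measurableSet_annulusA (N : ℕ) (R : ℝ) : MeasurableSet (annulusA N R) :=
  measurableSet_ball.diff measurableSet_ball

lemma pairwise_disjoint_annulusA (N : ℕ) :
    Pairwise fun i j : ℤ => Disjoint (annulusA N (2 ^ i)) (annulusA N (2 ^ j)) := by
  have key : ∀ i j : ℤ, i < j → ∀ x, x ∈ annulusA N (2 ^ i) → x ∉ annulusA N (2 ^ j) := by
    intro i j hij x hi hj
    simp only [annulusA, Set.mem_sdiff, mem_ball_zero_iff, not_lt] at hi hj
    have h : (2 : ℝ) ^ i * 2 ≤ 2 ^ j := by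
      rw [← zpow_add_one₀ (two_ne_zero : (2 : ℝ) ≠ 0)]
      exact zpow_le_zpow_right₀ one_le_two hij
    linarith [hi.1, hj.2]
  intro i j hij
  rw [Set.disjoint_left]
  intro x hi hj
  rcases hij.lt_or_gt with h | h
  · exact key i j h x hi hj
  · exact key j i h x hj hi

lemma exists_mem_annulusA {N : ℕ} {x : Euc N} (hx : x ≠ 0) :
    ∃ k : ℤ, x ∈ annulusA N (2 ^ k) := by
  obtain ⟨k, h₁, h₂⟩ := exists_mem_Ico_zpow (norm_pos_iff.2 hx) (one_lt_two : (1 : ℝ) < 2)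
  refine ⟨k + 1, ?_⟩
  simp only [annulusA, Set.mem_sdiff, mem_ball_zero_iff, not_lt]
  refine ⟨h₂, ?_⟩
  rw [zpow_add_one₀ two_ne_zero]
  linarith

lemma omegaWt_pos {β γ R : ℝ} (hR : 0 < R) : 0 < omegaWt β γ R := by
  unfold omegaWt
  split_ifs <;> positivity

/-- The coefficients `R^s ω_{β,γ}(R)` at `R = 2^k` are dominated by a convergent geometric series
in each direction. -/
lemma summable_dyadic_weight {s β γ : ℝ} (hβ : -s < β) (hγ : γ < -s) :
    Summable fun k : ℤ => ((2 : ℝ) ^ k) ^ s * omegaWt β γ (2 ^ k) := by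
  refine Summable.of_nat_of_neg ?_ ?_
  · refine (summable_geometric_of_lt_one (r := (2 : ℝ) ^ (s + γ)) (by positivity)
      (Real.rpow_lt_one_of_one_lt_of_neg one_lt_two (by linarith))).congr fun n => ?_
    have hw : omegaWt β γ ((2 : ℝ) ^ n) = ((2 : ℝ) ^ n) ^ γ := by
      unfold omegaWt
      split_ifs with h
      · -- On this branch `2^n = 1`, where both weights agree.
        rw [le_antisymm h (one_le_pow₀ one_le_two), Real.one_rpow, Real.one_rpow]
      · rfl
    rw [zpow_natCast, hw, ← Real.rpow_add (by positivity), Real.rpow_pow_comm zero_le_two]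
  · refine (summable_geometric_of_lt_one (r := (2 : ℝ) ^ (-(s + β))) (by positivity)
      (Real.rpow_lt_one_of_one_lt_of_neg one_lt_two (by linarith))).congr fun n => ?_
    have hw : omegaWt β γ (((2 : ℝ) ^ n)⁻¹) = (((2 : ℝ) ^ n)⁻¹) ^ β :=
      if_pos (inv_le_one_of_one_le₀ (one_le_pow₀ one_le_two))
    rw [zpow_neg, zpow_natCast, hw, ← Real.rpow_add (by positivity),
      Real.rpow_pow_comm zero_le_two, Real.inv_rpow (by positivity), Real.rpow_neg (by positivity)]

lemma eLpNorm_annulusA_le (N : ℕ) (q : ℝ≥0∞) (β γ : ℝ) (f : Euc N → ℝ) {R : ℝ} (hR : 0 < R) :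
    eLpNorm f q (volume.restrict (annulusA N R)) ≤
      ENNReal.ofReal (R ^ ((N : ℝ) / q.toReal) * omegaWt β γ R) * wNorm N q β γ f := by
  have hw := omegaWt_pos (β := β) (γ := γ) hR
  calc eLpNorm f q (volume.restrict (annulusA N R))
      = ENNReal.ofReal (R ^ ((N : ℝ) / q.toReal) * omegaWt β γ R) *
          (ENNReal.ofReal (R ^ (-((N : ℝ) / q.toReal)) / omegaWt β γ R) *
            eLpNorm f q (volume.restrict (annulusA N R))) := by
        rw [← mul_assoc, ← ENNReal.ofReal_mul (by positivity), Real.rpow_neg hR.le]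
        have h := (Real.rpow_pos_of_pos hR ((N : ℝ) / q.toReal)).ne'
        have : R ^ ((N : ℝ) / q.toReal) * omegaWt β γ R *
            ((R ^ ((N : ℝ) / q.toReal))⁻¹ / omegaWt β γ R) = 1 := by
          field_simp
        rw [this, ENNReal.ofReal_one, one_mul]
    _ ≤ _ := by
        gcongr
        exact le_iSup (fun R : {R : ℝ // 0 < R} =>
          ENNReal.ofReal (((R : ℝ) ^ (-((N : ℝ) / q.toReal))) / omegaWt β γ (R : ℝ)) *
            eLpNorm f q (volume.restrict (annulusA N (R : ℝ)))) ⟨R, hR⟩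

/-- **Lemma 2.1 (2)**: if `β > -N/q` and `γ < -N/q`, then `L^q_{β,γ} ↪ L^q(ℝ^N)`. -/
theorem wSpace_into_Lq
    (N : ℕ) (hN : 3 ≤ N) (q : ℝ≥0∞) (β γ : ℝ) (hq : 1 ≤ q)
    (hβ : -((N : ℝ) / q.toReal) < β) (hγ : γ < -((N : ℝ) / q.toReal)) :
    ∃ C : ℝ, 0 < C ∧ ∀ f : Euc N → ℝ, MemW N q β γ f →
      eLpNorm f q volume ≤ ENNReal.ofReal C * wNorm N q β γ f := by
  have hsum := summable_dyadic_weight hβ hγ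
  have hpos : ∀ k : ℤ, 0 < ((2 : ℝ) ^ k) ^ ((N : ℝ) / q.toReal) * omegaWt β γ (2 ^ k) :=
    fun k => mul_pos (by positivity) (omegaWt_pos (by positivity))
  refine ⟨∑' k : ℤ, ((2 : ℝ) ^ k) ^ ((N : ℝ) / q.toReal) * omegaWt β γ (2 ^ k),
    hsum.tsum_pos (fun k => (hpos k).le) 0 (hpos 0), fun f hf => ?_⟩
  -- In positive dimension the origin, the only point missed by the annuli, is a null set.
  have : Nonempty (Fin N) := ⟨⟨0, by omega⟩⟩
  have hcov : ∀ᵐ x : Euc N, ∃ k : ℤ, x ∈ annulusA N (2 ^ k) := by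
    filter_upwards [Measure.ae_ne volume (0 : Euc N)] with x hx using exists_mem_annulusA hx
  refine (eLpNorm_le_tsum_restrict hq hf.1 (fun k => measurableSet_annulusA N _)
    (pairwise_disjoint_annulusA N) hcov).trans ?_
  rw [ENNReal.ofReal_tsum_of_nonneg (fun k => (hpos k).le) hsum, ← ENNReal.tsum_mul_right]
  exact ENNReal.tsum_le_tsum fun k => eLpNorm_annulusA_le N q β γ f (by positivity)
end
end

section
/- Under the standing assumptions (H), let 0 < κ ≤ κ', let U^κ_j, V^κ_j (j = 0,1,2,...) be the approximate solutions defined by the recursion below, and assume all these functions are finite a.e. Then for every j = 0,1,2,... and a.e. x ∈ ℝ^N: (κ'/κ) U^κ_j(x) ≤ U^{κ'}_j(x) ≤ (κ'/κ)^{p^j} U^κ_j(x) and (κ'/κ)^{j(p-1)+1} V^κ_j(x) ≤ V^{κ'}_j(x) ≤ (κ'/κ)^{p^j} V^κ_j(x). Moreover, for every j there exists C > 0 such that for all 0 < ε < 1 and a.e. x ∈ ℝ^N: ε U^κ_j(x) ≤ U^{(1+ε)κ}_j(x) - U^κ_j(x) ≤ C ε U^κ_j(x) and ε V^κ_j(x)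 ≤ V^{(1+ε)κ}_j(x) - V^κ_j(x) ≤ C ε V^κ_j(x), and these differences are positive. -/
/-!
Write `lam = κ' / κ ≥ 1`. The estimates for `U_j` follow by induction from the recursion, since
`lam ≤ lam ^ (p ^ (j + 1))`, `lam ≤ lam ^ p` and `(lam ^ (p ^ j)) ^ p = lam ^ (p ^ (j + 1))`.

For the differences, set `U_{-1} = 0` (`approxPrev`). Where the potentials are finite,
`V_{j+1}(x) = ∫ Γ(x - y) α(y) (U_j(y) ^ p - U_{j-1}(y) ^ p) dy` (`approxV_succ_ae`), and the integrand
is governed by the increment `g(u, v) = (u + v) ^ p - u ^ p` with `u = U_{j-1}`, `v = V_j`.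
Convexity of `t ↦ t ^ p` makes `g` monotone in both arguments (`incr_mono`) and superlinear in `v`,
i.e. `c g(u, v) ≤ g(u, c v)` for `c ≥ 1` (`incr_superlinear`), while `g` is homogeneous of degree `p`
(`incr_scale`). Hence a lower factor `lam` on `u` and `lam ^ m` on `v` yields a factor
`lam ^ p * lam ^ (m - 1)` on `g`, which turns `m = j (p - 1) + 1` into `(j + 1) (p - 1) + 1`; an upper
factor `lam ^ (p ^ j)` on both arguments becomes its `p`-th power.

The estimates for `κ' = (1 + ε) κ` follow from `1 + ε ≤ (1 + ε) ^ (j (p - 1) + 1)` and the secant bound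
`(1 + ε) ^ q ≤ 1 + (2 ^ q - 1) ε` on `[0, 1]`. Strictness uses that `U_j` and `V_j` are a.e. positive:
`Γ * μ` can vanish only at a point carrying all the mass of `μ`, where the convention
`fundSol N 0 = 0` kills the integral; positivity of `V_j` then propagates through the integral formula.
-/

open MeasureTheory Metric ENNReal Filter

noncomputable section

/-- The approximate solutions `U^κ_j` (with `U^κ_{-1} ≡ 0`, so that
`U^κ_0 = κ Γ*μ`). -/
def approxU (N : ℕ) (α : Euc N → ℝ) (p : ℝ) (μ : Measure (Euc N)) (κ : ℝ) :
    ℕ → Euc N → ℝ≥0∞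
  | 0 => fun x => ENNReal.ofReal κ * GammaConvMeas N μ x
  | j + 1 => fun x =>
      (∫⁻ y, ENNReal.ofReal (fundSol N (x - y)) * ENNReal.ofReal (α y) *
          approxU N α p μ κ j y ^ p) +
        ENNReal.ofReal κ * GammaConvMeas N μ x

/-- The differences `V^κ_j = U^κ_j - U^κ_{j-1}`. -/
def approxV (N : ℕ) (α : Euc N → ℝ) (p : ℝ) (μ : Measure (Euc N)) (κ : ℝ) :
    ℕ → Euc N → ℝ≥0∞
  | 0 => approxU N α p μ κ 0
  | j + 1 => fun x => approxU N α p μ κ (j + 1) x - approxU N α p μ κ j x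

/-! ### Convexity estimates for increments of a power -/

/-- Increments of `t ↦ t ^ p` grow with the base point and with the step. -/
lemma real_incr_mono {p u v u' v' : ℝ} (hp : 1 ≤ p) (hu : 0 ≤ u) (hv : 0 ≤ v) (huu : u ≤ u')
    (hvv : v ≤ v') : (u + v) ^ p + u' ^ p ≤ (u' + v') ^ p + u ^ p := by
  have h1 : (u' + v) ^ p ≤ (u' + v') ^ p :=
    Real.rpow_le_rpow (by linarith) (by linarith) (by linarith)
  suffices h : (u + v) ^ p + u' ^ p ≤ (u' + v) ^ p + u ^ p by linarith
  rcases eq_or_lt_of_le hv with rfl | hv0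
  · simp [add_comm]
  -- `u + v` and `u'` are convex combinations of `u` and `u' + v` with exchanged weights.
  have hd : 0 < u' - u + v := by linarith
  have hc := (convexOn_rpow hp).2 (x := u) (y := u' + v) (by simpa using hu)
    (by simp only [Set.mem_Ici]; linarith)
  have ha : 0 ≤ (u' - u) / (u' - u + v) := div_nonneg (by linarith) hd.le
  have hb : 0 ≤ v / (u' - u + v) := div_nonneg hv hd.le
  have hab : (u' - u) / (u' - u + v) + v / (u' - u + v) = 1 := by
    field_simp
  have e1 := hc ha hb hab
  have e2 := hc hb ha (by rw [add_comm]; exact hab)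
  simp only [smul_eq_mul] at e1 e2
  have f1 : (u' - u) / (u' - u + v) * u + v / (u' - u + v) * (u' + v) = u + v := by
    field_simp; ring
  have f2 : v / (u' - u + v) * u + (u' - u) / (u' - u + v) * (u' + v) = u' := by
    field_simp; ring
  rw [f1] at e1
  rw [f2] at e2
  generalize (u' - u) / (u' - u + v) = s at *
  generalize v / (u' - u + v) = t at *
  obtain rfl : t = 1 - s := by linarith
  linarith

lemma real_incr_superlinear {p u v c : ℝ} (hp : 1 ≤ p) (hu : 0 ≤ u) (hv : 0 ≤ v) (hc : 1 ≤ c) :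
    c * (u + v) ^ p + u ^ p ≤ (u + c * v) ^ p + c * u ^ p := by
  have hc0 : 0 < c := by linarith
  have hcv := (convexOn_rpow hp).2 (x := u) (y := u + c * v) (by simpa using hu)
    (by simp only [Set.mem_Ici]; positivity)
  have h := @hcv (1 - 1 / c) (1 / c)
    (by rw [sub_nonneg, div_le_one hc0]; exact hc) (by positivity) (by ring)
  simp only [smul_eq_mul] at h
  have f : (1 - 1 / c) * u + 1 / c * (u + c * v) = u + v := by field_simp; ring
  rw [f] at h
  have h2 := mul_le_mul_of_nonneg_left h hc0.le
  have f2 : c * ((1 - 1 / c) * u ^ p + 1 / c * (u + c * v) ^ p)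
      = (u + c * v) ^ p + c * u ^ p - u ^ p := by
    field_simp; ring
  linarith

/-- The increment `(u + v) ^ p - u ^ p` is monotone in `u` and `v`. -/
lemma incr_mono {p : ℝ} (hp : 1 ≤ p) {u v u' v' : ℝ≥0∞} (hu' : u' ≠ ⊤) (hv' : v' ≠ ⊤)
    (huu : u ≤ u') (hvv : v ≤ v') : (u + v) ^ p - u ^ p ≤ (u' + v') ^ p - u' ^ p := by
  have hp0 : 0 ≤ p := by linarith
  have hu : u ≠ ⊤ := ne_top_of_le_ne_top hu' huu
  have hv : v ≠ ⊤ := ne_top_of_le_ne_top hv' hvv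
  lift u to NNReal using hu
  lift v to NNReal using hv
  lift u' to NNReal using hu'
  lift v' to NNReal using hv'
  have huu1 : u ≤ u' := by exact_mod_cast huu
  have hvv1 : v ≤ v' := by exact_mod_cast hvv
  have h := real_incr_mono hp u.2 v.2 (u' := u') (v' := v') huu1 hvv1
  have h2 : (u + v) ^ p + u' ^ p ≤ (u' + v') ^ p + u ^ p := by
    rw [← NNReal.coe_le_coe]; push_cast; exact h
  rw [← ENNReal.coe_add, ← ENNReal.coe_add, ← ENNReal.coe_rpow_of_nonneg _ hp0,
    ← ENNReal.coe_rpow_of_nonneg _ hp0, ← ENNReal.coe_rpow_of_nonneg _ hp0,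
    ← ENNReal.coe_rpow_of_nonneg _ hp0]
  norm_cast
  rw [tsub_le_iff_right]
  have h3 : u' ^ p ≤ (u' + v') ^ p := NNReal.rpow_le_rpow le_self_add hp0
  rw [tsub_add_eq_add_tsub h3]
  exact le_tsub_of_add_le_right h2

/-- The increment `(u + v) ^ p - u ^ p` is superlinear in the step `v`. -/
lemma incr_superlinear {p : ℝ} (hp : 1 ≤ p) {u v : ℝ≥0∞} (hu : u ≠ ⊤) (hv : v ≠ ⊤) {c : ℝ}
    (hc : 1 ≤ c) : ENNReal.ofReal c * ((u + v) ^ p - u ^ p)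
      ≤ (u + ENNReal.ofReal c * v) ^ p - u ^ p := by
  have hp0 : 0 ≤ p := by linarith
  lift u to NNReal using hu
  lift v to NNReal using hv
  lift c to NNReal using by linarith
  have h := real_incr_superlinear hp u.2 v.2 hc
  have h2 : c * (u + v) ^ p + u ^ p ≤ (u + c * v) ^ p + c * u ^ p := by
    rw [← NNReal.coe_le_coe]; push_cast; exact h
  rw [ENNReal.ofReal_coe_nnreal, ← ENNReal.coe_mul, ← ENNReal.coe_add, ← ENNReal.coe_add,
    ← ENNReal.coe_rpow_of_nonneg _ hp0,
    ← ENNReal.coe_rpow_of_nonneg _ hp0, ← ENNReal.coe_rpow_of_nonneg _ hp0]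
  norm_cast
  rw [mul_tsub, tsub_le_iff_right]
  have h3 : u ^ p ≤ (u + c * v) ^ p := NNReal.rpow_le_rpow le_self_add hp0
  rw [tsub_add_eq_add_tsub h3]
  exact le_tsub_of_add_le_right h2

lemma ofReal_rpow_mul_rpow {p c : ℝ} (hp : 0 ≤ p) (hc : 0 ≤ c) (x : ℝ≥0∞) :
    ENNReal.ofReal (c ^ p) * x ^ p = (ENNReal.ofReal c * x) ^ p := by
  rw [ENNReal.mul_rpow_of_nonneg _ _ hp, ENNReal.ofReal_rpow_of_nonneg hc hp]

/-- The increment `(u + v) ^ p - u ^ p` is homogeneous of degree `p`. -/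
lemma incr_scale {p c : ℝ} (hp : 0 ≤ p) (hc : 0 ≤ c) (u v : ℝ≥0∞) :
    ENNReal.ofReal (c ^ p) * ((u + v) ^ p - u ^ p)
      = (ENNReal.ofReal c * u + ENNReal.ofReal c * v) ^ p - (ENNReal.ofReal c * u) ^ p := by
  rw [ENNReal.mul_sub (fun _ _ => ENNReal.ofReal_ne_top), ofReal_rpow_mul_rpow hp hc,
    ofReal_rpow_mul_rpow hp hc, mul_add]

/-- One step of the lower estimate: a factor `lam` on `u` and `lam ^ m` on `w - u` produces
`lam ^ (p + (m - 1))` on `w ^ p - u ^ p`. -/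
lemma incr_lower {p lam m : ℝ} (hp : 1 ≤ p) (hl : 1 ≤ lam) (hm : 1 ≤ m) {u w u' w' : ℝ≥0∞}
    (hw : w ≠ ⊤) (hw' : w' ≠ ⊤) (huw : u ≤ w) (huw' : u' ≤ w')
    (h1 : ENNReal.ofReal lam * u ≤ u')
    (h2 : ENNReal.ofReal (lam ^ m) * (w - u) ≤ w' - u') :
    ENNReal.ofReal (lam ^ (p + (m - 1))) * (w ^ p - u ^ p) ≤ w' ^ p - u' ^ p := by
  have hl0 : 0 < lam := by linarith
  have hu : u ≠ ⊤ := ne_top_of_le_ne_top hw huw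
  have hu' : u' ≠ ⊤ := ne_top_of_le_ne_top hw' huw'
  obtain ⟨v, rfl⟩ := exists_add_of_le huw
  obtain ⟨v', rfl⟩ := exists_add_of_le huw'
  rw [ENNReal.add_sub_cancel_left hu, ENNReal.add_sub_cancel_left hu'] at h2
  have hv : v ≠ ⊤ := ne_top_of_le_ne_top hw le_add_self
  have hv' : v' ≠ ⊤ := ne_top_of_le_ne_top hw' le_add_self
  rw [Real.rpow_add hl0, ENNReal.ofReal_mul (by positivity), mul_assoc]
  calc _ ≤ ENNReal.ofReal (lam ^ p) * ((u + ENNReal.ofReal (lam ^ (m - 1)) * v) ^ p - u ^ p) :=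
        mul_le_mul_right (incr_superlinear hp hu hv
          (Real.one_le_rpow hl (by linarith))) _
    _ = _ := incr_scale (by linarith) hl0.le _ _
    _ ≤ _ := by
      apply incr_mono hp hu' hv' h1
      rw [← mul_assoc, ← ENNReal.ofReal_mul hl0.le]
      convert h2 using 3
      rw [← Real.rpow_one_add' hl0.le (by linarith)]
      congr 1; ring

/-- One step of the upper estimate: a common factor `c` on `u` and `w - u` becomes `c ^ p`. -/
lemma incr_upper {p c : ℝ} (hp : 1 ≤ p) (hc : 0 ≤ c) {u w u' w' : ℝ≥0∞}
    (hw : w ≠ ⊤) (hw' : w' ≠ ⊤) (huw : u ≤ w) (huw' : u' ≤ w')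
    (h1 : u' ≤ ENNReal.ofReal c * u)
    (h2 : w' - u' ≤ ENNReal.ofReal c * (w - u)) :
    w' ^ p - u' ^ p ≤ ENNReal.ofReal (c ^ p) * (w ^ p - u ^ p) := by
  have hu : u ≠ ⊤ := ne_top_of_le_ne_top hw huw
  have hu' : u' ≠ ⊤ := ne_top_of_le_ne_top hw' huw'
  obtain ⟨v, rfl⟩ := exists_add_of_le huw
  obtain ⟨v', rfl⟩ := exists_add_of_le huw'
  rw [ENNReal.add_sub_cancel_left hu, ENNReal.add_sub_cancel_left hu'] at h2
  have hv : v ≠ ⊤ := ne_top_of_le_ne_top hw le_add_self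
  rw [incr_scale (by linarith) hc]
  exact incr_mono hp (ENNReal.mul_ne_top ENNReal.ofReal_ne_top hu)
    (ENNReal.mul_ne_top ENNReal.ofReal_ne_top hv) h1 h2

/-- Passage from multiplicative bounds to bounds for the difference. -/
lemma diff_bounds {x x' : ℝ≥0∞} {ε D : ℝ} (hε : 0 < ε) (hD : 0 ≤ D) (hx0 : 0 < x) (hx : x ≠ ⊤)
    (h1 : ENNReal.ofReal (1 + ε) * x ≤ x') (h2 : x' ≤ ENNReal.ofReal (1 + D) * x) :
    x < x' ∧ ENNReal.ofReal ε * x ≤ x' - x ∧ x' - x ≤ ENNReal.ofReal D * x := by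
  rw [ENNReal.ofReal_add zero_le_one hε.le, ENNReal.ofReal_one, add_mul, one_mul] at h1
  rw [ENNReal.ofReal_add zero_le_one hD, ENNReal.ofReal_one, add_mul, one_mul] at h2
  refine ⟨lt_of_lt_of_le (ENNReal.lt_add_right hx ?_) h1, ?_, ?_⟩
  · exact mul_ne_zero (by simpa using hε) hx0.ne'
  · exact ENNReal.le_sub_of_add_le_left hx h1
  · rw [tsub_le_iff_left]; exact h2

/-- The secant bound for the convex function `ε ↦ (1 + ε) ^ q` on `[0, 1]`. -/
lemma one_add_rpow_le_secant {q ε : ℝ} (hq : 1 ≤ q) (h0 : 0 ≤ ε) (h1 : ε ≤ 1) :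
    (1 + ε) ^ q ≤ 1 + (2 ^ q - 1) * ε := by
  have hcv := (convexOn_rpow hq).2 (x := 1) (y := 2) (by simp) (by simp)
  have h := @hcv (1 - ε) ε (by linarith) h0 (by ring)
  simp only [smul_eq_mul, Real.one_rpow] at h
  have f : (1 - ε) * 1 + ε * 2 = 1 + ε := by ring
  rw [f] at h
  linarith

/-! ### The kernel and measurability -/

lemma fundSol_pos {N : ℕ} (hN : 3 ≤ N) {z : Euc N} (hz : z ≠ 0) : 0 < fundSol N z := by
  have hN' : (3 : ℝ) ≤ N := by exact_mod_cast hN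
  have hb : 0 < (volume (ball (0 : Euc N) 1)).toReal :=
    ENNReal.toReal_pos (measure_ball_pos _ _ one_pos).ne' measure_ball_lt_top.ne
  unfold fundSol
  have : 0 < ‖z‖ := norm_pos_iff.2 hz
  have : 0 < (N : ℝ) - 2 := by linarith
  positivity

lemma measurable_fundSol (N : ℕ) : Measurable (fundSol N) := by
  unfold fundSol
  fun_prop

lemma measurable_GammaConvMeas (N : ℕ) (μ : Measure (Euc N)) [IsLocallyFiniteMeasure μ] :
    Measurable (GammaConvMeas N μ) := by
  have h : Measurable fun z : Euc N × Euc N => ENNReal.ofReal (fundSol N (z.1 - z.2)) :=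
    ((measurable_fundSol N).comp (measurable_fst.sub measurable_snd)).ennreal_ofReal
  exact h.lintegral_prod_right'

lemma measurable_approxU {N : ℕ} {α : Euc N → ℝ} (hα : Measurable α) (p : ℝ)
    (μ : Measure (Euc N)) [IsLocallyFiniteMeasure μ] (κ : ℝ) (j : ℕ) :
    Measurable (approxU N α p μ κ j) := by
  induction j with
  | zero => exact (measurable_GammaConvMeas N μ).const_mul _
  | succ j ih =>
    have h : Measurable fun z : Euc N × Euc N => ENNReal.ofReal (fundSol N (z.1 - z.2)) *
        ENNReal.ofReal (α z.2) * approxU N α p μ κ j z.2 ^ p := by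
      have h1 : Measurable fun z : Euc N × Euc N => ENNReal.ofReal (fundSol N (z.1 - z.2)) :=
        ((measurable_fundSol N).comp (measurable_fst.sub measurable_snd)).ennreal_ofReal
      have h2 : Measurable fun z : Euc N × Euc N => ENNReal.ofReal (α z.2) :=
        (hα.comp measurable_snd).ennreal_ofReal
      exact (h1.mul h2).mul ((ih.comp measurable_snd).pow_const p)
    exact h.lintegral_prod_right'.add ((measurable_GammaConvMeas N μ).const_mul _)

/-- `Γ * μ` can vanish only at a point that carries all the mass of `μ`. -/
lemma GammaConvMeas_pos_ae {N : ℕ} (hN : 3 ≤ N) {μ : Measure (Euc N)} (hμ : μ ≠ 0) :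
    ∀ᵐ x, 0 < GammaConvMeas N μ x := by
  have : Nonempty (Fin N) := ⟨⟨0, by omega⟩⟩
  have hS : {x : Euc N | μ {x}ᶜ = 0}.Subsingleton := by
    intro x hx y hy
    by_contra hxy
    apply hμ
    rw [← Measure.measure_univ_eq_zero]
    refine measure_mono_null ?_ (measure_union_null hx hy)
    intro z _
    by_cases hz : z = x
    · right; rintro rfl; exact hxy hz.symm
    · left; exact hz
  have h0 : volume {x : Euc N | μ {x}ᶜ = 0} = 0 := hS.measure_zero _
  filter_upwards [measure_eq_zero_iff_ae_notMem.1 h0] with x hx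
  unfold GammaConvMeas
  have hm : Measurable fun y : Euc N => ENNReal.ofReal (fundSol N (x - y)) :=
    ((measurable_fundSol N).comp (measurable_const.sub measurable_id)).ennreal_ofReal
  rw [lintegral_pos_iff_support hm]
  refine lt_of_lt_of_le (pos_iff_ne_zero.2 hx) (measure_mono ?_)
  intro y hy
  have : 0 < fundSol N (x - y) := fundSol_pos hN (sub_ne_zero.2 (Ne.symm hy))
  simpa using this

/-! ### The recursion and its differences -/

/-- The predecessor `U_{j-1}` in the recursion, with the convention `U_{-1} = 0`. -/
def approxPrev (N : ℕ) (α : Euc N → ℝ) (p : ℝ) (μ : Measure (Euc N)) (κ : ℝ) :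
    ℕ → Euc N → ℝ≥0∞
  | 0 => fun _ => 0
  | j + 1 => approxU N α p μ κ j

section Recursion

variable {N : ℕ} {α : Euc N → ℝ} {p : ℝ} {μ : Measure (Euc N)} {κ : ℝ}

lemma approxU_eq (hp : 0 < p) (j : ℕ) (x : Euc N) :
    approxU N α p μ κ j x = (∫⁻ y, ENNReal.ofReal (fundSol N (x - y)) * ENNReal.ofReal (α y) *
      approxPrev N α p μ κ j y ^ p) + ENNReal.ofReal κ * GammaConvMeas N μ x := by
  cases j with
  | zero => simp [approxU, approxPrev, ENNReal.zero_rpow_of_pos hp]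
  | succ j => rfl

lemma approxV_eq (j : ℕ) (x : Euc N) :
    approxV N α p μ κ j x = approxU N α p μ κ j x - approxPrev N α p μ κ j x := by
  cases j with
  | zero => simp [approxV, approxPrev]
  | succ j => rfl

lemma approxPrev_le (hp : 0 < p) (j : ℕ) (x : Euc N) :
    approxPrev N α p μ κ j x ≤ approxU N α p μ κ j x := by
  induction j generalizing x with
  | zero => exact zero_le
  | succ j ih =>
    rw [approxU_eq hp (j + 1) x]
    change approxU N α p μ κ j x ≤ _
    rw [approxU_eq hp j x]
    gcongr with y
    exact ih y

lemma measurable_approxPrev (hα : Measurable α) [IsLocallyFiniteMeasure μ] (j : ℕ) :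
    Measurable (approxPrev N α p μ κ j) := by
  cases j with
  | zero => exact measurable_const
  | succ j => exact measurable_approxU hα p μ κ j

/-- The source term `κ (Γ * μ)` cancels in `V_{j+1}`, where `U_j` is finite. -/
lemma approxV_succ_ae (hp : 0 < p) (hα : Measurable α) [IsLocallyFiniteMeasure μ] (j : ℕ)
    (hfin : ∀ᵐ x, approxU N α p μ κ j x < ⊤) :
    ∀ᵐ x, approxV N α p μ κ (j + 1) x =
      ∫⁻ y, ENNReal.ofReal (fundSol N (x - y)) * ENNReal.ofReal (α y) *
        (approxU N α p μ κ j y ^ p - approxPrev N α p μ κ j y ^ p) := by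
  filter_upwards [hfin] with x hx
  have hx' := hx
  rw [approxU_eq hp j x] at hx'
  have hm1 : Measurable fun y : Euc N => ENNReal.ofReal (fundSol N (x - y)) *
      ENNReal.ofReal (α y) :=
    ((measurable_fundSol N).comp (measurable_const.sub measurable_id)).ennreal_ofReal.mul
      hα.ennreal_ofReal
  have hm2 : Measurable fun y : Euc N => ENNReal.ofReal (fundSol N (x - y)) *
      ENNReal.ofReal (α y) * approxPrev N α p μ κ j y ^ p :=
    hm1.mul ((measurable_approxPrev hα j).pow_const p)
  have hI := ne_top_of_le_ne_top hx'.ne le_self_add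
  have hG := ne_top_of_le_ne_top hx'.ne le_add_self
  rw [approxV_eq]
  change approxU N α p μ κ (j + 1) x - approxU N α p μ κ j x = _
  rw [approxU_eq hp (j + 1) x, approxU_eq hp j x, ENNReal.add_sub_add_eq_sub_right hG]
  rw [← lintegral_sub hm2 hI]
  · refine lintegral_congr fun y => ?_
    rw [ENNReal.mul_sub (fun _ _ => ENNReal.mul_ne_top ENNReal.ofReal_ne_top
      ENNReal.ofReal_ne_top)]
    rfl
  · refine Eventually.of_forall fun y => ?_
    exact mul_le_mul_right (ENNReal.rpow_le_rpow (approxPrev_le hp j y) hp.le) _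

lemma approxU_pos_ae (hN : 3 ≤ N) (hp : 0 < p) (hμ : μ ≠ 0) (hκ : 0 < κ) (j : ℕ) :
    ∀ᵐ x, 0 < approxU N α p μ κ j x := by
  filter_upwards [GammaConvMeas_pos_ae hN hμ] with x hx
  rw [approxU_eq hp]
  refine lt_of_lt_of_le (ENNReal.mul_pos ?_ hx.ne') le_add_self
  simpa using hκ

lemma approxV_pos_ae (hN : 3 ≤ N) (hp : 0 < p) (hα : Measurable α) (hα_pos : ∀ x, x ≠ 0 → 0 < α x)
    [IsLocallyFiniteMeasure μ] (hμ : μ ≠ 0) (hκ : 0 < κ)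
    (hfin : ∀ j, ∀ᵐ x, approxU N α p μ κ j x < ⊤) (j : ℕ) :
    ∀ᵐ x, 0 < approxV N α p μ κ j x := by
  have : Nonempty (Fin N) := ⟨⟨0, by omega⟩⟩
  induction j with
  | zero => exact approxU_pos_ae (α := α) hN hp hμ hκ 0
  | succ j ih =>
    filter_upwards [approxV_succ_ae hp hα j (hfin j)] with x hx
    rw [hx, pos_iff_ne_zero]
    have hm1 : Measurable fun y : Euc N => ENNReal.ofReal (fundSol N (x - y)) *
        ENNReal.ofReal (α y) :=
      ((measurable_fundSol N).comp (measurable_const.sub measurable_id)).ennreal_ofReal.mul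
        hα.ennreal_ofReal
    have hm2 : Measurable fun y : Euc N => ENNReal.ofReal (fundSol N (x - y)) *
        ENNReal.ofReal (α y) * (approxU N α p μ κ j y ^ p - approxPrev N α p μ κ j y ^ p) :=
      hm1.mul (((measurable_approxU hα p μ κ j).pow_const p).sub
        ((measurable_approxPrev hα j).pow_const p))
    intro h0
    have h1 := (lintegral_eq_zero_iff hm2).1 h0
    have hne : ∀ z : Euc N, ∀ᵐ y : Euc N, y ≠ z := fun z => by
      simp [ae_iff]
    -- A vanishing integral would make a positive integrand vanish a.e.
    have hF : ∀ᵐ _ : Euc N, False := by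
      filter_upwards [h1, ih, hne x, hne 0] with y e1 e2 e3 e4
      rw [approxV_eq, tsub_pos_iff_lt] at e2
      have e5 := ENNReal.rpow_lt_rpow e2 hp
      have e6 := fundSol_pos hN (sub_ne_zero.2 e3.symm)
      have e7 := hα_pos y e4
      have e8 : 0 < ENNReal.ofReal (fundSol N (x - y)) * ENNReal.ofReal (α y) *
          (approxU N α p μ κ j y ^ p - approxPrev N α p μ κ j y ^ p) :=
        ENNReal.mul_pos (ENNReal.mul_pos (by simpa using e6) (by simpa using e7)).ne'
          (tsub_pos_iff_lt.2 e5).ne'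
      exact e8.ne' e1
    exact hF.exists.elim fun _ h => h

/-! ### Comparison of two parameters -/

lemma approxU_lower (hp : 1 < p) {lam : ℝ} (hl : 1 ≤ lam) (j : ℕ) (x : Euc N) :
    ENNReal.ofReal lam * approxU N α p μ κ j x ≤ approxU N α p μ (lam * κ) j x := by
  have hl0 : 0 ≤ lam := by linarith
  induction j generalizing x with
  | zero =>
    simp only [approxU]
    rw [ENNReal.ofReal_mul hl0, mul_assoc]
  | succ j ih =>
    simp only [approxU]
    rw [mul_add, ENNReal.ofReal_mul hl0, mul_assoc,
      ← lintegral_const_mul' _ _ ENNReal.ofReal_ne_top]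
    refine add_le_add (lintegral_mono fun y => ?_) le_rfl
    rw [mul_left_comm]
    gcongr
    calc _ ≤ ENNReal.ofReal (lam ^ p) * approxU N α p μ κ j y ^ p := by
          gcongr
          exact Real.self_le_rpow_of_one_le hl hp.le
      _ = _ := ofReal_rpow_mul_rpow (by linarith) hl0 _
      _ ≤ _ := ENNReal.rpow_le_rpow (ih y) (by linarith)

lemma approxU_upper (hp : 1 < p) {lam : ℝ} (hl : 1 ≤ lam) (j : ℕ) (x : Euc N) :
    approxU N α p μ (lam * κ) j x ≤ ENNReal.ofReal (lam ^ (p ^ j)) * approxU N α p μ κ j x := by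
  have hl0 : 0 ≤ lam := by linarith
  induction j generalizing x with
  | zero =>
    simp only [approxU]
    rw [ENNReal.ofReal_mul hl0, mul_assoc, pow_zero, Real.rpow_one]
  | succ j ih =>
    simp only [approxU]
    rw [mul_add, ENNReal.ofReal_mul hl0, mul_assoc,
      ← lintegral_const_mul' _ _ ENNReal.ofReal_ne_top]
    have hq : lam ≤ lam ^ p ^ (j + 1) := Real.self_le_rpow_of_one_le hl (one_le_pow₀ hp.le)
    refine add_le_add (lintegral_mono fun y => ?_)
      (mul_le_mul_left (ENNReal.ofReal_le_ofReal hq) _)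
    rw [mul_left_comm]
    gcongr
    rw [pow_succ, Real.rpow_mul hl0, ofReal_rpow_mul_rpow (by linarith) (by positivity)]
    exact ENNReal.rpow_le_rpow (ih y) (by linarith)

lemma approxPrev_lower (hp : 1 < p) {lam : ℝ} (hl : 1 ≤ lam) (j : ℕ) (x : Euc N) :
    ENNReal.ofReal lam * approxPrev N α p μ κ j x ≤ approxPrev N α p μ (lam * κ) j x := by
  cases j with
  | zero => simp [approxPrev]
  | succ j => exact approxU_lower hp hl j x

lemma approxPrev_upper (hp : 1 < p) {lam : ℝ} (hl : 1 ≤ lam) (j : ℕ) (x : Euc N) :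
    approxPrev N α p μ (lam * κ) j x
      ≤ ENNReal.ofReal (lam ^ (p ^ j)) * approxPrev N α p μ κ j x := by
  cases j with
  | zero => simp [approxPrev]
  | succ j =>
    refine (approxU_upper hp hl j x).trans ?_
    change _ ≤ _ * approxU N α p μ κ j x
    refine mul_le_mul_left (ENNReal.ofReal_le_ofReal ?_) _
    exact Real.rpow_le_rpow_of_exponent_le hl (pow_le_pow_right₀ hp.le (Nat.le_succ j))

lemma approxV_bounds (hp : 1 < p) (hα : Measurable α) [IsLocallyFiniteMeasure μ] {lam : ℝ}
    (hl : 1 ≤ lam) (hfin : ∀ j, ∀ᵐ x, approxU N α p μ κ j x < ⊤)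
    (hfin' : ∀ j, ∀ᵐ x, approxU N α p μ (lam * κ) j x < ⊤) (j : ℕ) :
    ∀ᵐ x, ENNReal.ofReal (lam ^ ((j : ℝ) * (p - 1) + 1)) * approxV N α p μ κ j x
        ≤ approxV N α p μ (lam * κ) j x ∧
      approxV N α p μ (lam * κ) j x
        ≤ ENNReal.ofReal (lam ^ (p ^ j)) * approxV N α p μ κ j x := by
  have hp0 : 0 < p := by linarith
  have hl0 : 0 ≤ lam := by linarith
  induction j with
  | zero =>
    refine Eventually.of_forall fun x => ⟨?_, approxU_upper (α := α) hp hl 0 x⟩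
    simpa [approxV] using approxU_lower (α := α) (μ := μ) (κ := κ) hp hl 0 x
  | succ j ih =>
    filter_upwards [approxV_succ_ae hp0 hα j (hfin j), approxV_succ_ae hp0 hα j (hfin' j)]
      with x hx hx'
    rw [hx, hx', ← lintegral_const_mul' _ _ ENNReal.ofReal_ne_top,
      ← lintegral_const_mul' _ _ ENNReal.ofReal_ne_top]
    constructor
    · refine lintegral_mono_ae ?_
      filter_upwards [ih, hfin j, hfin' j] with y hy h1 h2
      rw [mul_left_comm]
      gcongr
      rw [approxV_eq, approxV_eq] at hy
      have hm : 1 ≤ (j : ℝ) * (p - 1) + 1 := by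
        have : 0 ≤ (j : ℝ) * (p - 1) := mul_nonneg (Nat.cast_nonneg j) (by linarith)
        linarith
      have h := incr_lower hp.le hl hm h1.ne h2.ne (approxPrev_le hp0 j y)
        (approxPrev_le hp0 j y) (approxPrev_lower hp hl j y) hy.1
      have he : ((j + 1 : ℕ) : ℝ) * (p - 1) + 1 = p + ((j : ℝ) * (p - 1) + 1 - 1) := by
        push_cast; ring
      rw [he]
      exact h
    · refine lintegral_mono_ae ?_
      filter_upwards [ih, hfin j, hfin' j] with y hy h1 h2
      rw [mul_left_comm]
      gcongr
      rw [approxV_eq, approxV_eq] at hy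
      rw [pow_succ, Real.rpow_mul hl0]
      exact incr_upper hp.le (by positivity) h1.ne h2.ne (approxPrev_le hp0 j y)
        (approxPrev_le hp0 j y) (approxPrev_upper hp hl j y) hy.2

end Recursion

/-- **Lemma 2.3**: monotonicity and comparison estimates for the approximate solutions
`U^κ_j` and their differences `V^κ_j` with respect to the parameter `κ`. -/
theorem approx_solutions_kappa_estimates
    (N : ℕ) (hN : 3 ≤ N)
    (α : Euc N → ℝ) (a b : ℝ)
    (hα_cont : ContinuousOn α {(0 : Euc N)}ᶜ)
    (hα_pos : ∀ x : Euc N, x ≠ 0 → 0 < α x)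
    (ha : -2 < a)
    (hα0 : ∃ C : ℝ, ∀ᶠ x : Euc N in nhdsWithin 0 {(0 : Euc N)}ᶜ, ‖x‖ ^ (-a) * α x ≤ C)
    (hαinf : ∃ C : ℝ, ∀ᶠ x : Euc N in comap (fun x : Euc N => ‖x‖) atTop, ‖x‖ ^ (-b) * α x ≤ C)
    (p : ℝ) (hp : 1 < p)
    (μ : Measure (Euc N)) [IsLocallyFiniteMeasure μ] (hμ : μ ≠ 0)
    (κ κ' : ℝ) (hκ : 0 < κ) (hκκ' : κ ≤ κ')
    (hfin : ∀ κ'' : ℝ, 0 < κ'' → ∀ j : ℕ, ∀ᵐ x, approxU N α p μ κ'' j x < ⊤) :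
    (∀ j : ℕ, ∀ᵐ x,
      ENNReal.ofReal (κ' / κ) * approxU N α p μ κ j x ≤ approxU N α p μ κ' j x ∧
      approxU N α p μ κ' j x
        ≤ ENNReal.ofReal ((κ' / κ) ^ (p ^ j)) * approxU N α p μ κ j x ∧
      ENNReal.ofReal ((κ' / κ) ^ ((j : ℝ) * (p - 1) + 1)) * approxV N α p μ κ j x
        ≤ approxV N α p μ κ' j x ∧
      approxV N α p μ κ' j x
        ≤ ENNReal.ofReal ((κ' / κ) ^ (p ^ j)) * approxV N α p μ κ j x) ∧
    ∀ j : ℕ, ∃ C : ℝ, 0 < C ∧ ∀ ε : ℝ, 0 < ε → ε < 1 → ∀ᵐ x,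
      approxU N α p μ κ j x < approxU N α p μ ((1 + ε) * κ) j x ∧
      ENNReal.ofReal ε * approxU N α p μ κ j x
        ≤ approxU N α p μ ((1 + ε) * κ) j x - approxU N α p μ κ j x ∧
      approxU N α p μ ((1 + ε) * κ) j x - approxU N α p μ κ j x
        ≤ ENNReal.ofReal (C * ε) * approxU N α p μ κ j x ∧
      approxV N α p μ κ j x < approxV N α p μ ((1 + ε) * κ) j x ∧
      ENNReal.ofReal ε * approxV N α p μ κ j x
        ≤ approxV N α p μ ((1 + ε) * κ) j x - approxV N α p μ κ j x ∧
      approxV N α p μ ((1 + ε) * κ) j x - approxV N α p μ κ j x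
        ≤ ENNReal.ofReal (C * ε) * approxV N α p μ κ j x := by
  have hp0 : 0 < p := by linarith
  have hα : Measurable α := measurable_of_continuousOn_compl_singleton 0 hα_cont
  constructor
  · intro j
    have hl : 1 ≤ κ' / κ := (one_le_div hκ).2 hκκ'
    have he : κ' / κ * κ = κ' := div_mul_cancel₀ _ hκ.ne'
    have hV := approxV_bounds hp hα hl (hfin κ hκ)
      (fun j => by rw [he]; exact hfin κ' (by linarith) j) j
    have hU1 := approxU_lower (α := α) (μ := μ) (κ := κ) hp hl j
    have hU2 := approxU_upper (α := α) (μ := μ) (κ := κ) hp hl j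
    rw [he] at hV
    simp only [he] at hU1 hU2
    filter_upwards [hV] with x hx
    exact ⟨hU1 x, hU2 x, hx.1, hx.2⟩
  · intro j
    have hq : 1 ≤ p ^ j := one_le_pow₀ hp.le
    have hC : (0 : ℝ) < 2 ^ (p ^ j) - 1 := by
      have : (2 : ℝ) ≤ 2 ^ (p ^ j) := Real.self_le_rpow_of_one_le (by norm_num) hq
      linarith
    -- `C` is the slope of the secant of `ε ↦ (1 + ε) ^ (p ^ j)` over `[0, 1]`.
    refine ⟨2 ^ (p ^ j) - 1, hC, fun ε hε hε1 => ?_⟩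
    have hl : 1 ≤ 1 + ε := by linarith
    have hsec := one_add_rpow_le_secant hq hε.le hε1.le
    have hlow : 1 + ε ≤ (1 + ε) ^ ((j : ℝ) * (p - 1) + 1) := by
      apply Real.self_le_rpow_of_one_le hl
      have : 0 ≤ (j : ℝ) * (p - 1) := mul_nonneg (Nat.cast_nonneg j) (by linarith)
      linarith
    have hD : 0 ≤ ((2 : ℝ) ^ (p ^ j) - 1) * ε := by positivity
    filter_upwards [approxV_bounds hp hα hl (hfin κ hκ) (hfin ((1 + ε) * κ) (by positivity)) j,
      hfin κ hκ j, approxU_pos_ae (α := α) hN hp0 hμ hκ j,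
      approxV_pos_ae hN hp0 hα hα_pos hμ hκ (hfin κ hκ) j] with x hx hf hU0 hV0
    have hVf : approxV N α p μ κ j x ≠ ⊤ := by
      rw [approxV_eq]; exact ne_top_of_le_ne_top hf.ne tsub_le_self
    obtain ⟨a1, a2, a3⟩ := diff_bounds hε hD hU0 hf.ne (approxU_lower hp hl j x)
      ((approxU_upper hp hl j x).trans
        (mul_le_mul_left (ENNReal.ofReal_le_ofReal hsec) _))
    obtain ⟨b1, b2, b3⟩ := diff_bounds hε hD hV0 hVf
      ((mul_le_mul_left (ENNReal.ofReal_le_ofReal hlow) _).trans hx.1)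
      (hx.2.trans (mul_le_mul_left (ENNReal.ofReal_le_ofReal hsec) _))
    exact ⟨a1, a2, a3, b1, b2, b3⟩
end
end
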